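/- Let {η_j}_{j≥1} be independent random variables with P{η_k=k}=1/k and P{η_k=0}=1−1/k, and let θ_n = Σ_{j=1}^n η_j. Then for every real λ the characteristic function of θ_n/n, namely ∏_{k=1}^n ( 1 − 1/k + (1/k)·e^{iλk/n} ), converges as n→∞ to exp( ∫_0^1 (e^{iλv}−1)/v dv ) (the integrand extended continuously by iλ at v=0); equivalently, the distributions of θ_n/n converge weakly to the Dickman–De Bruijn distribution. -/

import Mathlib

open Filter MeasureTheory
open scoped Topology

noncomputable section

/-- `φ(λ) = exp(∫_0^1 (e^{iλv}-1)/v dv)`, the characteristic function of the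
Dickman–De Bruijn distribution (integrand extended continuously by `iλ` at `v=0`). -/
def phi (lam : ℝ) : ℂ :=
  Complex.exp (∫ v in (0:ℝ)..1,
    if v = 0 then Complex.I * lam else (Complex.exp (Complex.I * lam * v) - 1) / v)

/-- The probability of the configuration `ν` of the independent variables `η_1,…,η_n`,
where `η_k = k` with probability `1/k` and `η_k = 0` otherwise (`ν k = true` iff `η_{k+1} = k+1`). -/
def massEta (n : ℕ) (ν : Fin n → Bool) : ℝ :=
  ∏ k : Fin n, if ν k then 1 / ((k : ℕ) + 1 : ℝ) else 1 - 1 / ((k : ℕ) + 1 : ℝ)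

/-- The value of `θ_n/n = (1/n) ∑_{j=1}^n η_j` on the configuration `ν`. -/
def thetaOverN (n : ℕ) (ν : Fin n → Bool) : ℝ :=
  (∑ k : Fin n, if ν k then ((k : ℕ) + 1 : ℝ) else 0) / n

/-- The law of `θ_n/n`, as a measure on `ℝ`. -/
def lawTheta (n : ℕ) : Measure ℝ :=
  ∑ ν : Fin n → Bool, ENNReal.ofReal (massEta n ν) • Measure.dirac (thetaOverN n ν)

/-!
Put `g(v) = (e^{iλv} - 1) / v`. The characteristic function of `θ_n / n` at `λ` is
`∏_{k ≤ n} (1 + g(k/n) / n)`. Since `g` is bounded, taking logarithms replaces this product by the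
exponential of `∑_{k ≤ n} g(k/n) / n` up to a vanishing error, and that sum is a Riemann sum of `g`
on `[0, 1]`. The limit is continuous at `λ = 0`, so Lévy's continuity theorem yields both
the limit law and the weak convergence.
-/

section TriangularProducts

variable {ι κ : Type*} {l : Filter ι} {s : ι → Finset κ} {z : ι → κ → ℂ} {S : ℂ}

lemma norm_log_one_add_sub_self_le_sq {w : ℂ} (hw : ‖w‖ ≤ 1 / 2) :
    ‖Complex.log (1 + w) - w‖ ≤ ‖w‖ ^ 2 := by
  have hinv : (1 - ‖w‖)⁻¹ ≤ 2 := inv_le_of_inv_le₀ two_pos (by linarith)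
  calc ‖Complex.log (1 + w) - w‖
      ≤ ‖w‖ ^ 2 * (1 - ‖w‖)⁻¹ / 2 := Complex.norm_log_one_add_sub_self_le (by linarith)
    _ ≤ ‖w‖ ^ 2 * 2 / 2 := by gcongr
    _ = ‖w‖ ^ 2 := by ring

lemma exp_sum_log_one_add {t : Finset κ} {w : κ → ℂ} (hw : ∀ k ∈ t, ‖w k‖ < 1) :
    Complex.exp (∑ k ∈ t, Complex.log (1 + w k)) = ∏ k ∈ t, (1 + w k) := by
  rw [Complex.exp_sum]
  refine Finset.prod_congr rfl fun k hk ↦ Complex.exp_log fun hzero ↦ ?_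
  have hnorm : ‖w k‖ = 1 := by rw [eq_neg_of_add_eq_zero_right hzero, norm_neg, norm_one]
  exact (hw k hk).ne hnorm

lemma eventually_forall_norm_le_of_tendsto_sum_sq
    (hsq : Tendsto (fun n ↦ ∑ k ∈ s n, ‖z n k‖ ^ 2) l (𝓝 0)) {ε : ℝ} (hε : 0 < ε) :
    ∀ᶠ n in l, ∀ k ∈ s n, ‖z n k‖ ≤ ε := by
  filter_upwards [hsq.eventually_le_const (pow_pos hε 2)] with n hn k hk
  have hterm : ‖z n k‖ ^ 2 ≤ ∑ j ∈ s n, ‖z n j‖ ^ 2 :=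
    Finset.single_le_sum (f := fun j ↦ ‖z n j‖ ^ 2) (fun _ _ ↦ by positivity) hk
  exact le_of_sq_le_sq (hterm.trans hn) hε.le

theorem tendsto_prod_one_add_of_tendsto_sum
    (hsum : Tendsto (fun n ↦ ∑ k ∈ s n, z n k) l (𝓝 S))
    (hsq : Tendsto (fun n ↦ ∑ k ∈ s n, ‖z n k‖ ^ 2) l (𝓝 0)) :
    Tendsto (fun n ↦ ∏ k ∈ s n, (1 + z n k)) l (𝓝 (Complex.exp S)) := by
  have hsmall := eventually_forall_norm_le_of_tendsto_sum_sq hsq one_half_pos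
  have hdiff : Tendsto (fun n ↦ ∑ k ∈ s n, (Complex.log (1 + z n k) - z n k)) l (𝓝 0) := by
    refine squeeze_zero_norm' ?_ hsq
    filter_upwards [hsmall] with n hn
    exact norm_sum_le_of_le _ fun k hk ↦ norm_log_one_add_sub_self_le_sq (hn k hk)
  have hlog : Tendsto (fun n ↦ ∑ k ∈ s n, Complex.log (1 + z n k)) l (𝓝 S) := by
    simpa [Finset.sum_sub_distrib] using hdiff.add hsum
  refine hlog.cexp.congr' ?_
  filter_upwards [hsmall] with n hn
  exact exp_sum_log_one_add fun k hk ↦ (hn k hk).trans_lt one_half_lt_one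

end TriangularProducts

section RiemannSums

variable {E : Type*} [NormedAddCommGroup E] [NormedSpace ℝ E] [CompleteSpace E]
  {f : ℝ → E} {a b ε : ℝ}

lemma norm_smul_sub_integral_le {c : E} (hab : a ≤ b) (hf : IntervalIntegrable f volume a b)
    (hc : ∀ x ∈ Set.Icc a b, ‖c - f x‖ ≤ ε) :
    ‖(b - a) • c - ∫ x in a..b, f x‖ ≤ ε * (b - a) := by
  rw [← intervalIntegral.integral_const, ← intervalIntegral.integral_sub (by simp) hf,
    ← abs_of_nonneg (sub_nonneg.2 hab)]
  refine intervalIntegral.norm_integral_le_of_norm_le_const fun x hx ↦ hc x ?_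
  rw [Set.uIoc_of_le hab] at hx
  exact Set.Ioc_subset_Icc_self hx

theorem norm_riemannSum_sub_integral_le {p ξ : ℕ → ℝ} {n : ℕ} (hp : ∀ k < n, p k ≤ p (k + 1))
    (hf : ∀ k < n, IntervalIntegrable f volume (p k) (p (k + 1)))
    (hosc : ∀ k < n, ∀ x ∈ Set.Icc (p k) (p (k + 1)), ‖f (ξ k) - f x‖ ≤ ε) :
    ‖∑ k ∈ Finset.range n, (p (k + 1) - p k) • f (ξ k) - ∫ x in p 0..p n, f x‖
      ≤ ε * (p n - p 0) := by
  rw [← intervalIntegral.sum_integral_adjacent_intervals hf, ← Finset.sum_sub_distrib,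
    ← Finset.sum_range_sub, Finset.mul_sum]
  refine norm_sum_le_of_le _ fun k hk ↦ ?_
  have hkn := Finset.mem_range.1 hk
  exact norm_smul_sub_integral_le (hp k hkn) (hf k hkn) (hosc k hkn)

lemma norm_uniform_riemannSum_sub_integral_le (hab : a ≤ b) (hf : ContinuousOn f (Set.Icc a b))
    {n : ℕ} (hn : n ≠ 0)
    (hosc : ∀ x ∈ Set.Icc a b, ∀ y ∈ Set.Icc a b, dist x y ≤ (b - a) / n → dist (f x) (f y) ≤ ε) :
    ‖∑ k ∈ Finset.range n, ((b - a) / n) • f (a + (k + 1) * ((b - a) / n)) - ∫ x in a..b, f x‖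
      ≤ ε * (b - a) := by
  set h := (b - a) / n
  have hh : 0 ≤ h := div_nonneg (sub_nonneg.2 hab) n.cast_nonneg
  have hnh : n * h = b - a := mul_div_cancel₀ _ (Nat.cast_ne_zero.2 hn)
  let p : ℕ → ℝ := fun k ↦ a + k * h
  have hp : Monotone p := fun i j hij ↦
    add_le_add_right (mul_le_mul_of_nonneg_right (Nat.cast_le.2 hij) hh) a
  have hp_zero : p 0 = a := by simp [p]
  have hp_last : p n = b := by simp only [p, hnh]; ring
  have hp_succ (k : ℕ) : p (k + 1) - p k = h := by simp only [p]; push_cast; ring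
  have hcell {k : ℕ} (hk : k < n) : Set.Icc (p k) (p (k + 1)) ⊆ Set.Icc a b :=
    Set.Icc_subset_Icc (hp_zero ▸ hp k.zero_le) (hp_last ▸ hp hk)
  have hbound := norm_riemannSum_sub_integral_le (ξ := fun k ↦ p (k + 1))
    (fun k _ ↦ hp k.le_succ)
    (fun k hk ↦ (hf.mono (hcell hk)).intervalIntegrable_of_Icc (hp k.le_succ))
    fun k hk x hx ↦ by
      rw [← dist_eq_norm]
      refine hosc _ (hcell hk (Set.right_mem_Icc.2 (hp k.le_succ))) x (hcell hk hx) ?_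
      rw [Real.dist_eq, abs_of_nonneg (sub_nonneg.2 hx.2)]
      linarith [hx.1, hp_succ k]
  simp only [hp_succ, hp_zero, hp_last] at hbound
  simpa [p] using hbound

theorem tendsto_uniform_riemannSum (hab : a ≤ b) (hf : ContinuousOn f (Set.Icc a b)) :
    Tendsto (fun n : ℕ ↦ ∑ k ∈ Finset.range n,
        ((b - a) / n) • f (a + (k + 1) * ((b - a) / n)))
      atTop (𝓝 (∫ x in a..b, f x)) := by
  rw [Metric.tendsto_nhds]
  intro ε hε
  obtain ⟨η, hη, hηε⟩ : ∃ η > 0, (b - a) * η < ε := exists_pos_mul_lt hε _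
  obtain ⟨δ, hδ, hfδ⟩ := Metric.uniformContinuousOn_iff.1
    (isCompact_Icc.uniformContinuousOn_of_continuous hf) η hη
  have hmesh : Tendsto (fun n : ℕ ↦ (b - a) / n) atTop (𝓝 0) :=
    tendsto_const_div_atTop_nhds_zero_nat _
  filter_upwards [hmesh.eventually_lt_const hδ, eventually_ne_atTop 0] with n hstep hn
  rw [mul_comm] at hηε
  rw [dist_eq_norm]
  exact (norm_uniform_riemannSum_sub_integral_le hab hf hn fun x hx y hy hxy ↦
    (hfδ x hx y hy (hxy.trans_lt hstep)).le).trans_lt hηε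

end RiemannSums

section LevyContinuity

variable {E : Type*} [NormedAddCommGroup E] [InnerProductSpace ℝ E] [FiniteDimensional ℝ E]
  [MeasurableSpace E] [BorelSpace E]

theorem exists_tendsto_of_tendsto_charFun {μ : ℕ → ProbabilityMeasure E} {f : E → ℂ}
    (hf : ContinuousAt f 0)
    (hμ : ∀ t, Tendsto (fun n ↦ charFun (μ n : Measure E) t) atTop (𝓝 (f t))) :
    ∃ μ₀ : ProbabilityMeasure E, charFun (μ₀ : Measure E) = f ∧ Tendsto μ atTop (𝓝 μ₀) := by
  have htight := isTightMeasureSet_of_tendsto_charFun hf hμ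
  have hcompact : IsCompact (closure (Set.range μ)) :=
    isCompact_closure_of_isTightMeasureSet (by simpa [Set.range] using htight)
  obtain ⟨μ₀, -, φ, hφ, hlim⟩ :=
    hcompact.tendsto_subseq fun n ↦ subset_closure (Set.mem_range_self n)
  have hchar : charFun (μ₀ : Measure E) = f := funext fun t ↦
    tendsto_nhds_unique (ProbabilityMeasure.tendsto_iff_tendsto_charFun.1 hlim t)
      ((hμ t).comp hφ.tendsto_atTop)
  exact ⟨μ₀, hchar, ProbabilityMeasure.tendsto_of_tendsto_charFun (by rwa [hchar])⟩

end LevyContinuity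

section IndependentSums

open scoped RealInnerProductSpace

variable {ι : Type*} [Fintype ι] [DecidableEq ι] {β : ι → Type*} [∀ i, Fintype (β i)]
  {E : Type*} [MeasurableSpace E] {w : ∀ i, β i → ℝ}

/-- The law of a sum of independent finitely supported random vectors, the `i`-th of which takes
the value `x i b` with probability `w i b`. Meaningful only for nonnegative weights:
`ENNReal.ofReal` sends negative products to `0`. -/
def indepSumLaw [AddCommMonoid E] (w : ∀ i, β i → ℝ) (x : ∀ i, β i → E) : Measure E :=
  ∑ ν : ∀ i, β i, ENNReal.ofReal (∏ i, w i (ν i)) • Measure.dirac (∑ i, x i (ν i))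

lemma isProbabilityMeasure_indepSumLaw [AddCommMonoid E] (hw : ∀ i b, 0 ≤ w i b)
    (hw_sum : ∀ i, ∑ b, w i b = 1) (x : ∀ i, β i → E) :
    IsProbabilityMeasure (indepSumLaw w x) := by
  have hmass : ∑ ν : ∀ i, β i, ∏ i, w i (ν i) = 1 := by
    rw [← Fintype.prod_sum, Finset.prod_eq_one fun i _ ↦ hw_sum i]
  constructor
  simp only [indepSumLaw, Measure.finsetSum_apply, Measure.smul_apply, measure_univ, smul_eq_mul,
    mul_one]
  rw [← ENNReal.ofReal_sum_of_nonneg fun ν _ ↦ Finset.prod_nonneg fun i _ ↦ hw i (ν i), hmass,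
    ENNReal.ofReal_one]

theorem charFun_indepSumLaw [NormedAddCommGroup E] [InnerProductSpace ℝ E]
    [OpensMeasurableSpace E] (hw : ∀ i b, 0 ≤ w i b) (x : ∀ i, β i → E) (t : E) :
    charFun (indepSumLaw w x) t
      = ∏ i, ∑ b, (w i b : ℂ) * Complex.exp (⟪x i b, t⟫ * Complex.I) := by
  rw [charFun_apply, indepSumLaw, integral_finsetSum_measure fun ν _ ↦
    (integrable_dirac enorm_lt_top).smul_measure ENNReal.ofReal_ne_top, Fintype.prod_sum]
  refine Finset.sum_congr rfl fun ν _ ↦ ?_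
  rw [integral_smul_measure, integral_dirac,
    ENNReal.toReal_ofReal (Finset.prod_nonneg fun i _ ↦ hw i (ν i)), Complex.real_smul,
    Finset.prod_mul_distrib, ← Complex.exp_sum, ← Finset.sum_mul, sum_inner]
  push_cast
  rfl

end IndependentSums

section DickmanIntegrand

/-- The integrand `v ↦ (e^{iλv} - 1) / v` in the exponent of `phi`, with its limit `iλ` as the value
at `v = 0`. -/
def dickmanIntegrand (lam v : ℝ) : ℂ :=
  if v = 0 then Complex.I * lam else (Complex.exp (Complex.I * lam * v) - 1) / v

lemma phi_eq_exp_integral (lam : ℝ) :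
    phi lam = Complex.exp (∫ v in (0 : ℝ)..1, dickmanIntegrand lam v) :=
  rfl

lemma dickmanIntegrand_eq_dslope (lam : ℝ) :
    dickmanIntegrand lam = dslope (fun v : ℝ ↦ Complex.exp (Complex.I * lam * v)) 0 := by
  have hderiv : HasDerivAt (fun v : ℝ ↦ Complex.exp (Complex.I * lam * v)) (Complex.I * lam) 0 := by
    simpa using ((Complex.ofRealCLM.hasDerivAt (x := 0)).const_mul (Complex.I * lam)).cexp
  ext v
  rcases eq_or_ne v 0 with rfl | hv
  · rw [dslope_same, hderiv.deriv, dickmanIntegrand, if_pos rfl]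
  · simp [dslope_of_ne _ hv, dickmanIntegrand, hv, slope, div_eq_inv_mul]

lemma continuous_dickmanIntegrand (lam : ℝ) : Continuous (dickmanIntegrand lam) := by
  rw [dickmanIntegrand_eq_dslope, ← continuousOn_univ, continuousOn_dslope univ_mem]
  exact ⟨by fun_prop, by fun_prop⟩

lemma norm_dickmanIntegrand_le (lam v : ℝ) : ‖dickmanIntegrand lam v‖ ≤ |lam| := by
  unfold dickmanIntegrand
  split_ifs with hv
  · simp
  · rw [norm_div, div_le_iff₀ (by simpa using hv)]
    simpa [mul_assoc, abs_mul] using Real.norm_exp_I_mul_ofReal_sub_one_le (x := lam * v)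

lemma continuousAt_phi_zero : ContinuousAt phi 0 := by
  have hbound (lam : ℝ) : ‖∫ v in (0 : ℝ)..1, dickmanIntegrand lam v‖ ≤ |lam| := by
    simpa using intervalIntegral.norm_integral_le_of_norm_le_const (a := (0 : ℝ)) (b := 1)
      fun v _ ↦ norm_dickmanIntegrand_le lam v
  have hexponent : Tendsto (fun lam ↦ ∫ v in (0 : ℝ)..1, dickmanIntegrand lam v) (𝓝 0) (𝓝 0) :=
    squeeze_zero_norm hbound (by simpa using continuous_abs.tendsto (0 : ℝ))
  have hphi_zero : phi 0 = Complex.exp 0 := by simp [phi]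
  rw [ContinuousAt, hphi_zero]
  exact hexponent.cexp.congr fun lam ↦ (phi_eq_exp_integral lam).symm

lemma tendsto_prod_one_add_dickmanIntegrand (lam : ℝ) :
    Tendsto (fun n : ℕ ↦ ∏ k ∈ Finset.range n, (1 + dickmanIntegrand lam ((k + 1) / n) / n))
      atTop (𝓝 (phi lam)) := by
  rw [phi_eq_exp_integral]
  refine tendsto_prod_one_add_of_tendsto_sum ?_ ?_
  · simpa [← div_eq_mul_inv, ← div_eq_inv_mul] using
      tendsto_uniform_riemannSum zero_le_one (continuous_dickmanIntegrand lam).continuousOn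
  · refine squeeze_zero (fun n ↦ by positivity) (fun n ↦ ?_)
      (tendsto_const_div_atTop_nhds_zero_nat (|lam| ^ 2))
    calc ∑ k ∈ Finset.range n, ‖dickmanIntegrand lam ((k + 1) / n) / n‖ ^ 2
        ≤ ∑ _k ∈ Finset.range n, (|lam| / n) ^ 2 := by
          gcongr with k
          rw [norm_div, Complex.norm_natCast]
          gcongr
          exact norm_dickmanIntegrand_le _ _
      _ = |lam| ^ 2 / n := by
          rw [Finset.sum_const, Finset.card_range, nsmul_eq_mul]
          field_simp

end DickmanIntegrand

section LawOfTheta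

/-- The probability that `η_{k+1} = k + 1` (for `b = true`) or `η_{k+1} = 0` (for `b = false`). -/
def etaMass (k : ℕ) (b : Bool) : ℝ :=
  if b then 1 / ((k : ℝ) + 1) else 1 - 1 / ((k : ℝ) + 1)

/-- The value of `η_{k+1}` on the outcome `b`, matching `etaMass`. -/
def etaValue (k : ℕ) (b : Bool) : ℝ :=
  if b then (k : ℝ) + 1 else 0

lemma etaMass_nonneg (k : ℕ) (b : Bool) : 0 ≤ etaMass k b := by
  have hle : 1 / ((k : ℝ) + 1) ≤ 1 := div_le_one_of_le₀ (by simp) (by positivity)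
  cases b
  · simpa [etaMass] using hle
  · simp only [etaMass, if_true]
    positivity

lemma sum_etaMass (k : ℕ) : ∑ b, etaMass k b = 1 := by
  simp [etaMass]

lemma lawTheta_eq_indepSumLaw (n : ℕ) :
    lawTheta n = indepSumLaw (fun k : Fin n ↦ etaMass k) (fun k b ↦ etaValue k b / n) := by
  simp only [lawTheta, indepSumLaw, massEta, thetaOverN, etaMass, etaValue, Finset.sum_div]

instance isProbabilityMeasure_lawTheta (n : ℕ) : IsProbabilityMeasure (lawTheta n) := by
  rw [lawTheta_eq_indepSumLaw]
  exact isProbabilityMeasure_indepSumLaw (fun k : Fin n ↦ etaMass_nonneg k)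
    (fun k ↦ sum_etaMass k) _

lemma charFun_lawTheta (n : ℕ) (lam : ℝ) :
    charFun (lawTheta n) lam = ∏ k ∈ Finset.range n,
      (1 - 1 / ((k : ℝ) + 1) + (1 / ((k : ℝ) + 1)) *
        Complex.exp (Complex.I * lam * ((k : ℝ) + 1) / (n : ℝ))) := by
  rw [lawTheta_eq_indepSumLaw, charFun_indepSumLaw fun k : Fin n ↦ etaMass_nonneg k,
    Finset.prod_range]
  refine Finset.prod_congr rfl fun k _ ↦ ?_
  simp only [Fintype.sum_bool, etaMass, etaValue, RCLike.inner_apply, conj_trivial]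
  push_cast
  simp only [zero_div, mul_zero, zero_mul, Complex.exp_zero]
  ring_nf

lemma one_add_dickmanIntegrand_div {n : ℕ} (hn : n ≠ 0) (lam : ℝ) (k : ℕ) :
    1 + dickmanIntegrand lam ((k + 1) / n) / n =
      1 - 1 / ((k : ℝ) + 1) + (1 / ((k : ℝ) + 1)) *
        Complex.exp (Complex.I * lam * ((k : ℝ) + 1) / (n : ℝ)) := by
  have hv : ((k : ℝ) + 1) / n ≠ 0 := by positivity
  have hk : (k : ℂ) + 1 ≠ 0 := k.cast_add_one_ne_zero
  rw [dickmanIntegrand, if_neg hv]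
  push_cast
  rw [← mul_div_assoc]
  field_simp
  ring

theorem tendsto_charFun_lawTheta (lam : ℝ) :
    Tendsto (fun n ↦ charFun (lawTheta n) lam) atTop (𝓝 (phi lam)) := by
  refine (tendsto_prod_one_add_dickmanIntegrand lam).congr' ?_
  filter_upwards [eventually_ne_atTop 0] with n hn
  rw [charFun_lawTheta]
  exact Finset.prod_congr rfl fun k _ ↦ one_add_dickmanIntegrand_div hn lam k

end LawOfTheta

theorem theta_over_n_tendsto_dickman :
    (∀ lam : ℝ,
      Tendsto (fun n : ℕ => ∏ k ∈ Finset.range n,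
          (1 - 1 / ((k : ℝ) + 1) + (1 / ((k : ℝ) + 1)) *
            Complex.exp (Complex.I * lam * ((k : ℝ) + 1) / (n : ℝ))))
        atTop (𝓝 (phi lam))) ∧
    ∃ μ : Measure ℝ, IsProbabilityMeasure μ ∧
      (∀ lam : ℝ, (∫ x, Complex.exp (Complex.I * lam * x) ∂μ) = phi lam) ∧
      ∀ f : BoundedContinuousFunction ℝ ℝ,
        Tendsto (fun n : ℕ => ∫ x, f x ∂(lawTheta n)) atTop (𝓝 (∫ x, f x ∂μ)) := by
  refine ⟨fun lam ↦ by simpa only [charFun_lawTheta] using tendsto_charFun_lawTheta lam, ?_⟩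
  obtain ⟨μ, hchar, hweak⟩ := exists_tendsto_of_tendsto_charFun
    (μ := fun n ↦ ⟨lawTheta n, inferInstance⟩) continuousAt_phi_zero tendsto_charFun_lawTheta
  refine ⟨μ, inferInstance, fun lam ↦ ?_, fun f ↦ ?_⟩
  · rw [← hchar, charFun_apply_real]
    simp only [mul_comm, mul_left_comm]
  · exact ProbabilityMeasure.tendsto_iff_forall_integral_tendsto.1 hweak f

end
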